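/- Let u : ℝ² → ℝ be a smooth function of (x,t) satisfying the mKdV equation u_t + u_xxx − 6u²u_x = 0, and let Λ ∈ ℝ. Define the 2×2 matrix-valued functions b and c of (x,t) by b = [[−u, Λ],[Λ, u]] and c = [[u_xx − 2u³ + 4Λ²u, 2Λ(u² − u_x − 2Λ²)],[2Λ(u² + u_x − 2Λ²), −u_xx + 2u³ − 4Λ²u]]. Then the zero-curvature condition b_t − c_x + b·c − c·b = 0 holds identically on ℝ². -/

import Mathlib

noncomputable section

/-- Partial derivative of `f` with respect to its first argument. -/
def d1 (f : ℝ → ℝ → ℝ) : ℝ → ℝ → ℝ := fun a b => deriv (fun a' => f a' b) a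

/-- Partial derivative of `f` with respect to its second argument. -/
def d2 (f : ℝ → ℝ → ℝ) : ℝ → ℝ → ℝ := fun a b => deriv (fun b' => f a b') b

/-- Entrywise partial derivative of a matrix-valued function w.r.t. the first argument. -/
def dmat1 (A : ℝ → ℝ → Matrix (Fin 2) (Fin 2) ℝ) : ℝ → ℝ → Matrix (Fin 2) (Fin 2) ℝ :=
  fun a b => Matrix.of fun i j => deriv (fun a' => A a' b i j) a

/-- Entrywise partial derivative of a matrix-valued function w.r.t. the second argument. -/
def dmat2 (A : ℝ → ℝ → Matrix (Fin 2) (Fin 2) ℝ) : ℝ → ℝ → Matrix (Fin 2) (Fin 2) ℝ :=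
  fun a b => Matrix.of fun i j => deriv (fun b' => A a b' i j) b

/-- Smoothness of a two-variable real function. -/
def Smooth2 (f : ℝ → ℝ → ℝ) : Prop := ContDiff ℝ (⊤ : ℕ∞) (fun p : ℝ × ℝ => f p.1 p.2)

/-- The matrix `b` of the mKdV Lax pair. -/
def bMat (u : ℝ → ℝ → ℝ) (Λ : ℝ) : ℝ → ℝ → Matrix (Fin 2) (Fin 2) ℝ :=
  fun x t => !![-(u x t), Λ; Λ, u x t]

/-- The matrix `c` of the mKdV Lax pair. -/
def cMat (u : ℝ → ℝ → ℝ) (Λ : ℝ) : ℝ → ℝ → Matrix (Fin 2) (Fin 2) ℝ :=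
  fun x t =>
    !![d1 (d1 u) x t - 2 * (u x t) ^ 3 + 4 * Λ ^ 2 * u x t,
        2 * Λ * ((u x t) ^ 2 - d1 u x t - 2 * Λ ^ 2);
      2 * Λ * ((u x t) ^ 2 + d1 u x t - 2 * Λ ^ 2),
        -(d1 (d1 u) x t) + 2 * (u x t) ^ 3 - 4 * Λ ^ 2 * u x t]

/-!
The commutator `b·c − c·b` cancels the off-diagonal part of `c_x` and, on the diagonal, the terms in
`Λ`. What is left of the curvature is the mKdV expression times `diag(−1, 1)`, so that it vanishes
exactly where `u` solves the equation.
-/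

namespace Smooth2

variable {f : ℝ → ℝ → ℝ}

theorem d1 (hf : Smooth2 f) : Smooth2 (d1 f) := by
  have hslice : ContDiff ℝ (⊤ : ℕ∞) (fun q : (ℝ × ℝ) × ℝ => f q.2 q.1.2) :=
    ContDiff.comp (g := fun p : ℝ × ℝ => f p.1 p.2)
      (f := fun q : (ℝ × ℝ) × ℝ => (q.2, q.1.2)) hf (by fun_prop)
  -- `deriv g x` unfolds to `fderiv ℝ g x 1`.
  exact hslice.fderiv_apply contDiff_fst contDiff_const le_rfl

theorem differentiable_fst (hf : Smooth2 f) (t : ℝ) : Differentiable ℝ (fun x => f x t) :=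
  Differentiable.comp (g := fun p : ℝ × ℝ => f p.1 p.2) (f := fun x : ℝ => (x, t))
    (hf.differentiable (by simp)) (by fun_prop)

theorem differentiable_snd (hf : Smooth2 f) (x : ℝ) : Differentiable ℝ (f x) :=
  Differentiable.comp (g := fun p : ℝ × ℝ => f p.1 p.2) (f := fun t : ℝ => (x, t))
    (hf.differentiable (by simp)) (by fun_prop)

end Smooth2

section EntrywiseDerivatives

variable {A : ℝ → ℝ → Matrix (Fin 2) (Fin 2) ℝ} {A' : Matrix (Fin 2) (Fin 2) ℝ} {x t : ℝ}

theorem dmat1_eq_of_hasDerivAt (hA : ∀ i j, HasDerivAt (fun a => A a t i j) (A' i j) x) :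
    dmat1 A x t = A' :=
  Matrix.ext fun i j => (hA i j).deriv

theorem dmat2_eq_of_hasDerivAt (hA : ∀ i j, HasDerivAt (fun b => A x b i j) (A' i j) t) :
    dmat2 A x t = A' :=
  Matrix.ext fun i j => (hA i j).deriv

end EntrywiseDerivatives

section LaxPair

variable {u : ℝ → ℝ → ℝ} {x t : ℝ}

theorem dmat2_bMat {u_t : ℝ} (Λ : ℝ) (hu : HasDerivAt (u x) u_t t) :
    dmat2 (bMat u Λ) x t = !![-u_t, 0; 0, u_t] := by
  refine dmat2_eq_of_hasDerivAt fun i j => ?_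
  fin_cases i <;> fin_cases j
  exacts [hu.fun_neg, hasDerivAt_const t Λ, hasDerivAt_const t Λ, hu]

theorem dmat1_cMat {u_x u_xx u_xxx : ℝ} (Λ : ℝ)
    (hu : HasDerivAt (fun a => u a t) u_x x)
    (hu_x : HasDerivAt (fun a => d1 u a t) u_xx x)
    (hu_xx : HasDerivAt (fun a => d1 (d1 u) a t) u_xxx x) :
    dmat1 (cMat u Λ) x t =
      !![u_xxx - 6 * u x t ^ 2 * u_x + 4 * Λ ^ 2 * u_x, 2 * Λ * (2 * u x t * u_x - u_xx);
        2 * Λ * (2 * u x t * u_x + u_xx), -u_xxx + 6 * u x t ^ 2 * u_x - 4 * Λ ^ 2 * u_x] := by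
  have hsq : HasDerivAt (fun a => u a t ^ 2) (2 * u x t * u_x) x := by
    simpa using hu.fun_pow 2
  have hcube : HasDerivAt (fun a => 2 * u a t ^ 3) (6 * u x t ^ 2 * u_x) x :=
    ((hu.fun_pow 3).const_mul 2).congr_deriv (by push_cast; ring)
  have hlin : HasDerivAt (fun a => 4 * Λ ^ 2 * u a t) (4 * Λ ^ 2 * u_x) x :=
    hu.const_mul (4 * Λ ^ 2)
  refine dmat1_eq_of_hasDerivAt fun i j => ?_
  fin_cases i <;> fin_cases j
  · exact (hu_xx.fun_sub hcube).fun_add hlin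
  · exact ((hsq.fun_sub hu_x).sub_const (2 * Λ ^ 2)).const_mul (2 * Λ)
  · exact ((hsq.fun_add hu_x).sub_const (2 * Λ ^ 2)).const_mul (2 * Λ)
  · exact (hu_xx.fun_neg.fun_add hcube).fun_sub hlin

theorem bMat_mul_cMat_sub_cMat_mul_bMat (u : ℝ → ℝ → ℝ) (Λ x t : ℝ) :
    bMat u Λ x t * cMat u Λ x t - cMat u Λ x t * bMat u Λ x t =
      !![4 * Λ ^ 2 * d1 u x t, 2 * Λ * (2 * u x t * d1 u x t - d1 (d1 u) x t);
        2 * Λ * (2 * u x t * d1 u x t + d1 (d1 u) x t), -(4 * Λ ^ 2 * d1 u x t)] := by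
  simp only [bMat, cMat, Matrix.mul_fin_two]
  ext i j
  fin_cases i <;> fin_cases j <;>
    simp only [Fin.zero_eta, Fin.mk_one, Matrix.sub_apply, Matrix.of_apply, Matrix.cons_val] <;>
    ring

theorem bMat_cMat_curvature_eq_smul (Λ : ℝ)
    (hu_t : DifferentiableAt ℝ (u x) t)
    (hu : DifferentiableAt ℝ (fun a => u a t) x)
    (hu_x : DifferentiableAt ℝ (fun a => d1 u a t) x)
    (hu_xx : DifferentiableAt ℝ (fun a => d1 (d1 u) a t) x) :
    dmat2 (bMat u Λ) x t - dmat1 (cMat u Λ) x t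
        + bMat u Λ x t * cMat u Λ x t - cMat u Λ x t * bMat u Λ x t =
      (d2 u x t + d1 (d1 (d1 u)) x t - 6 * u x t ^ 2 * d1 u x t) • !![-1, 0; 0, 1] := by
  have hb : dmat2 (bMat u Λ) x t = !![-d2 u x t, 0; 0, d2 u x t] :=
    dmat2_bMat Λ hu_t.hasDerivAt
  have hc := dmat1_cMat (u_x := d1 u x t) (u_xx := d1 (d1 u) x t) (u_xxx := d1 (d1 (d1 u)) x t) Λ
    hu.hasDerivAt hu_x.hasDerivAt hu_xx.hasDerivAt
  rw [add_sub_assoc, bMat_mul_cMat_sub_cMat_mul_bMat, hb, hc]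
  ext i j
  fin_cases i <;> fin_cases j <;>
    simp only [Fin.zero_eta, Fin.mk_one, Matrix.add_apply, Matrix.sub_apply, Matrix.smul_apply,
      smul_eq_mul, Matrix.of_apply, Matrix.cons_val] <;>
    ring

theorem mKdV_zero_curvature_general (Λ : ℝ)
    (hu_t : DifferentiableAt ℝ (u x) t)
    (hu : DifferentiableAt ℝ (fun a => u a t) x)
    (hu_x : DifferentiableAt ℝ (fun a => d1 u a t) x)
    (hu_xx : DifferentiableAt ℝ (fun a => d1 (d1 u) a t) x) :
    dmat2 (bMat u Λ) x t - dmat1 (cMat u Λ) x t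
        + bMat u Λ x t * cMat u Λ x t - cMat u Λ x t * bMat u Λ x t = 0 ↔
      d2 u x t + d1 (d1 (d1 u)) x t - 6 * u x t ^ 2 * d1 u x t = 0 := by
  have hdiag : (!![-1, 0; 0, 1] : Matrix (Fin 2) (Fin 2) ℝ) ≠ 0 := fun h =>
    one_ne_zero (congrFun₂ h 1 1)
  rw [bMat_cMat_curvature_eq_smul Λ hu_t hu hu_x hu_xx, smul_eq_zero_iff_left hdiag]

end LaxPair

/-- if `u` solves mKdV then the zero-curvature condition
`b_t − c_x + b·c − c·b = 0` holds identically. -/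
theorem mKdV_zero_curvature (u : ℝ → ℝ → ℝ) (Λ : ℝ)
    (hu : Smooth2 u)
    (hmKdV : ∀ x t, d2 u x t + d1 (d1 (d1 u)) x t - 6 * (u x t) ^ 2 * d1 u x t = 0) :
    ∀ x t,
      dmat2 (bMat u Λ) x t - dmat1 (cMat u Λ) x t
        + bMat u Λ x t * cMat u Λ x t - cMat u Λ x t * bMat u Λ x t = 0 := by
  intro x t
  exact (mKdV_zero_curvature_general Λ (hu.differentiable_snd x t) (hu.differentiable_fst t x)
    (hu.d1.differentiable_fst t x) (hu.d1.d1.differentiable_fst t x)).2 (hmKdV x t)
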